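/- Assume the LAG setup, and in addition: 𝓛 is bounded below with 𝓛* := inf 𝓛; 0 < α < 1/L; β_1 = (1 − αL)/(2α); and ξ_d < 2α(β_d − β_{d+1}) for every d = 1, …, D (with β_{D+1} := 0). Then lim_{K→∞} K · min_{1 ≤ k ≤ K} ‖θ^{k+1} − θ^k‖² = 0 and lim_{K→∞} K · min_{1 ≤ k ≤ K} ‖∇𝓛(θ^k)‖² = 0. -/

import Mathlib

open Finset

/-!
LAG is gradient descent with an inexact gradient `g` whose squared error is at most `α⁻²` times a
weighted sum of the last `D` squared steps. The descent lemma and polarization give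
`f (x - α g) ≤ f x - α/2 ‖∇f x‖² + α/2 ‖g - ∇f x‖² - α(1 - αL)/2 ‖g‖²`. The choice of `β 1` makes
the last term pay for the newest step entering the Lyapunov function, while the strict decrease of
`β` beats `ξ / (2α)`, so the older steps absorb the error and a positive multiple of them is left
over. Hence the Lyapunov function drops by at least a positive multiple of
`‖∇f (θ k)‖² + ‖θ k - θ (k - 1)‖²`, both sequences are summable, and the minimum of the first `K`
terms of a summable sequence is `o(1/K)`, because it is at most the average of the last `K/2`
of them.
-/

section

open Filter Topology

section Sequences

theorem summable_of_succ_add_le_of_bddBelow {V a : ℕ → ℝ} (hV : BddBelow (Set.range V))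
    (ha : ∀ n, 0 ≤ a n) (h : ∀ n, V (n + 1) + a n ≤ V n) : Summable a := by
  obtain ⟨B, hB⟩ := hV
  refine summable_of_sum_range_le (c := V 0 - B) ha fun n => ?_
  calc ∑ i ∈ range n, a i ≤ ∑ i ∈ range n, (V i - V (i + 1)) :=
        sum_le_sum fun i _ => by linarith [h i]
    _ = V 0 - V n := sum_range_sub' V n
    _ ≤ V 0 - B := by linarith [hB ⟨n, rfl⟩]

theorem tendsto_natCast_mul_of_summable_of_forall_lt_le {a m : ℕ → ℝ} (ha : Summable a)
    (hm : ∀ K, 0 ≤ m K) (hma : ∀ K, ∀ k < K, m K ≤ a k) :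
    Tendsto (fun K : ℕ => (K : ℝ) * m K) atTop (𝓝 0) := by
  have hsum := ha.hasSum.tendsto_sum_nat
  have hhalf := hsum.comp (Nat.tendsto_div_const_atTop two_ne_zero)
  have hlim : Tendsto (fun K => 2 * (∑ k ∈ range K, a k - ∑ k ∈ range (K / 2), a k))
      atTop (𝓝 0) := by
    simpa using (hsum.sub hhalf).const_mul 2
  refine squeeze_zero (fun K => mul_nonneg K.cast_nonneg (hm K)) (fun K => ?_) hlim
  have hK : (K : ℝ) ≤ 2 * #(Ico (K / 2) K) := by
    rw [Nat.card_Ico]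
    exact_mod_cast (by lia : K ≤ 2 * (K - K / 2))
  calc (K : ℝ) * m K ≤ 2 * #(Ico (K / 2) K) * m K := mul_le_mul_of_nonneg_right hK (hm K)
    _ = 2 * (#(Ico (K / 2) K) • m K) := by rw [nsmul_eq_mul, mul_assoc]
    _ ≤ 2 * ∑ k ∈ Ico (K / 2) K, a k := by
        gcongr
        exact card_nsmul_le_sum _ _ _ fun k hk => hma K k (mem_Ico.1 hk).2
    _ = 2 * (∑ k ∈ range K, a k - ∑ k ∈ range (K / 2), a k) := by
        rw [sum_Ico_eq_sub _ (Nat.div_le_self K 2)]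

theorem tendsto_natCast_mul_sInf_image_Icc {a : ℤ → ℝ} (ha0 : ∀ k, 0 ≤ a k)
    (ha : Summable fun k : ℕ => a (k + 1)) :
    Tendsto (fun K : ℕ => (K : ℝ) * sInf (a '' Set.Icc 1 (K : ℤ))) atTop (𝓝 0) := by
  have hnonneg : ∀ K : ℕ, 0 ∈ lowerBounds (a '' Set.Icc 1 (K : ℤ)) := by
    rintro K _ ⟨k, -, rfl⟩
    exact ha0 k
  refine tendsto_natCast_mul_of_summable_of_forall_lt_le ha
    (fun K => Real.sInf_nonneg (hnonneg K)) fun K k hk => ?_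
  exact csInf_le ⟨0, hnonneg K⟩ ⟨k + 1, ⟨by lia, by lia⟩, rfl⟩

end Sequences

theorem sq_norm_sum_le_card_sq_mul {ι E : Type*} [SeminormedAddCommGroup E] {s : Finset ι}
    {e : ι → E} {B : ℝ} (he : ∀ i ∈ s, ‖e i‖ ^ 2 ≤ B) :
    ‖∑ i ∈ s, e i‖ ^ 2 ≤ (#s : ℝ) ^ 2 * B :=
  calc ‖∑ i ∈ s, e i‖ ^ 2 ≤ (∑ i ∈ s, ‖e i‖) ^ 2 := by
        gcongr
        exact norm_sum_le _ _
    _ ≤ #s * ∑ i ∈ s, ‖e i‖ ^ 2 := sq_sum_le_card_mul_sum_sq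
    _ ≤ #s * (#s • B) := by
        gcongr
        exact sum_le_card_nsmul _ _ _ he
    _ = (#s : ℝ) ^ 2 * B := by rw [nsmul_eq_mul]; ring

theorem le_add_fderiv_add_sq_of_fderiv_lipschitz {E : Type*} [NormedAddCommGroup E]
    [NormedSpace ℝ E] {f : E → ℝ} {L : ℝ} {x : E} (hf : Differentiable ℝ f)
    (hL : ∀ y, ‖fderiv ℝ f y - fderiv ℝ f x‖ ≤ L * ‖y - x‖) (v : E) :
    f (x + v) ≤ f x + fderiv ℝ f x v + L / 2 * ‖v‖ ^ 2 := by
  have hline (t : ℝ) : HasDerivAt (fun t : ℝ => f (x + t • v)) (fderiv ℝ f (x + t • v) v) t := by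
    have hv : HasDerivAt (fun t : ℝ => x + t • v) v t := by
      simpa using ((hasDerivAt_id t).smul_const v).const_add x
    exact (hf (x + t • v)).hasFDerivAt.comp_hasDerivAt t hv
  have hquad (t : ℝ) :
      HasDerivAt (fun t : ℝ => f x + t * fderiv ℝ f x v + L / 2 * ‖v‖ ^ 2 * t ^ 2)
        (fderiv ℝ f x v + L * t * ‖v‖ ^ 2) t := by
    refine ((((hasDerivAt_id t).mul_const (fderiv ℝ f x v)).const_add (f x)).add
      (((hasDerivAt_id t).pow 2).const_mul (L / 2 * ‖v‖ ^ 2))).congr_deriv ?_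
    simp only [id_eq]
    ring
  have hslope : ∀ t ∈ Set.Ico (0 : ℝ) 1,
      fderiv ℝ f (x + t • v) v ≤ fderiv ℝ f x v + L * t * ‖v‖ ^ 2 := by
    intro t ht
    rw [← sub_le_iff_le_add', ← sub_apply]
    calc (fderiv ℝ f (x + t • v) - fderiv ℝ f x) v
        ≤ ‖fderiv ℝ f (x + t • v) - fderiv ℝ f x‖ * ‖v‖ :=
          (le_abs_self _).trans <| (fderiv ℝ f (x + t • v) - fderiv ℝ f x).le_opNorm v
      _ ≤ L * ‖t • v‖ * ‖v‖ := by
          gcongr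
          simpa using hL (x + t • v)
      _ = L * t * ‖v‖ ^ 2 := by rw [norm_smul, Real.norm_of_nonneg ht.1]; ring
  simpa using image_le_of_deriv_right_le_deriv_boundary
    (fun t _ => (hline t).continuousAt.continuousWithinAt)
    (fun t _ => (hline t).hasDerivWithinAt) (by simp)
    (fun t _ => (hquad t).continuousAt.continuousWithinAt)
    (fun t _ => (hquad t).hasDerivWithinAt) hslope (Set.right_mem_Icc.2 zero_le_one)

section Gradient

variable {E : Type*} [NormedAddCommGroup E] [InnerProductSpace ℝ E] [CompleteSpace E]

theorem norm_fderiv_sub_fderiv_eq_norm_gradient_sub_gradient (f : E → ℝ) (x y : E) :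
    ‖fderiv ℝ f x - fderiv ℝ f y‖ = ‖gradient f x - gradient f y‖ := by
  rw [← toDual_gradient, ← toDual_gradient, ← map_sub, LinearIsometryEquiv.norm_map]

theorem gradient_fun_sum {ι : Type*} {s : Finset ι} {f : ι → E → ℝ} {x : E}
    (hf : ∀ i ∈ s, DifferentiableAt ℝ (f i) x) :
    gradient (fun z => ∑ i ∈ s, f i z) x = ∑ i ∈ s, gradient (f i) x := by
  simp only [gradient, fderiv_fun_sum hf, map_sum]

theorem inexact_gradient_step_le {f : E → ℝ} {L : ℝ} {x : E} (hf : Differentiable ℝ f)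
    (hL : ∀ y, ‖gradient f y - gradient f x‖ ≤ L * ‖y - x‖) (α : ℝ) (g : E) :
    f (x - α • g) ≤ f x - α / 2 * ‖gradient f x‖ ^ 2 + α / 2 * ‖g - gradient f x‖ ^ 2
      - α * (1 - α * L) / 2 * ‖g‖ ^ 2 := by
  have hdescent : f (x - α • g) ≤ f x - α * inner ℝ g (gradient f x)
      + L / 2 * (α ^ 2 * ‖g‖ ^ 2) := by
    have h := le_add_fderiv_add_sq_of_fderiv_lipschitz hf (fun y =>
      (norm_fderiv_sub_fderiv_eq_norm_gradient_sub_gradient f y x).trans_le (hL y)) (-(α • g))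
    rwa [← sub_eq_add_neg, ← inner_gradient_left, inner_neg_right, inner_smul_right,
      real_inner_comm, norm_neg, norm_smul, mul_pow, Real.norm_eq_abs, sq_abs,
      ← sub_eq_add_neg] at h
  rw [norm_sub_sq_real]
  linarith

end Gradient

section PastSteps

variable {E : Type*} [NormedAddCommGroup E] {D : ℕ} {w : ℕ → ℝ}

/-- The weighted sum `∑ w_d ‖θ^{k+1-d} - θ^{k-d}‖²` of the `D` squared steps preceding time `k`.
It is the memory term of the Lyapunov function for `w = β`, and the right-hand side of the
trigger condition, up to normalization, for `w = ξ`. -/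
def pastStepSum (D : ℕ) (w : ℕ → ℝ) (θ : ℤ → E) (k : ℤ) : ℝ :=
  ∑ d ∈ Icc 1 D, w d * ‖θ (k + 1 - d) - θ (k - d)‖ ^ 2

theorem pastStepSum_nonneg (hw : ∀ d ∈ Icc 1 D, 0 ≤ w d) (θ : ℤ → E) (k : ℤ) :
    0 ≤ pastStepSum D w θ k :=
  sum_nonneg fun d hd => mul_nonneg (hw d hd) (sq_nonneg _)

theorem mul_sq_norm_step_le_pastStepSum (hw : ∀ d ∈ Icc 1 D, 0 ≤ w d) (θ : ℤ → E) (k : ℤ)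
    {d : ℕ} (hd : d ∈ Icc 1 D) :
    w d * ‖θ (k + 1 - d) - θ (k - d)‖ ^ 2 ≤ pastStepSum D w θ k :=
  single_le_sum (f := fun d : ℕ => w d * ‖θ (k + 1 - d) - θ (k - d)‖ ^ 2)
    (fun d hd => mul_nonneg (hw d hd) (sq_nonneg _)) hd

theorem pastStepSum_succ_succ (D : ℕ) (w : ℕ → ℝ) (θ : ℤ → E) (k : ℤ) :
    pastStepSum (D + 1) w θ (k + 1) =
      w 1 * ‖θ (k + 1) - θ k‖ ^ 2 + pastStepSum D (fun d => w (d + 1)) θ k := by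
  induction D with
  | zero => simp [pastStepSum]
  | succ D ih =>
    have hk : k + 1 - ((D + 1 + 1 : ℕ) : ℤ) = k - (D + 1 : ℕ) := by push_cast; ring
    have hk' : k + 1 + 1 - ((D + 1 + 1 : ℕ) : ℤ) = k + 1 - (D + 1 : ℕ) := by push_cast; ring
    unfold pastStepSum at ih ⊢
    rw [sum_Icc_succ_top (by lia), ih, sum_Icc_succ_top (by lia), add_assoc, hk, hk']

theorem pastStepSum_succ_of_eq_zero (hw : w (D + 1) = 0) (θ : ℤ → E) (k : ℤ) :
    pastStepSum (D + 1) w θ k = pastStepSum D w θ k := by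
  rw [pastStepSum, sum_Icc_succ_top (by lia), hw, zero_mul, add_zero, pastStepSum]

/-- The Lyapunov function `V^k`, without the additive constant `-𝓛*`, which cancels in every
difference `V^{k+1} - V^k`. -/
def lagLyapunov (f : E → ℝ) (D : ℕ) (β : ℕ → ℝ) (θ : ℤ → E) (k : ℤ) : ℝ :=
  f (θ k) + pastStepSum D β θ k

end PastSteps

section InexactGradientDescent

variable {E : Type*} [NormedAddCommGroup E] [InnerProductSpace ℝ E] [CompleteSpace E]
  {f : E → ℝ} {L α : ℝ} {D : ℕ} {ξ β : ℕ → ℝ} {θ : ℤ → E}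

theorem lagLyapunov_succ_add_le {k : ℤ} {g : E} (hf : Differentiable ℝ f)
    (hL : ∀ y, ‖gradient f y - gradient f (θ k)‖ ≤ L * ‖y - θ k‖) (hα : 0 < α)
    (hβD : β (D + 1) = 0) (hβ1 : β 1 ≤ (1 - α * L) / (2 * α)) (hupd : θ (k + 1) = θ k - α • g)
    (herr : ‖g - gradient f (θ k)‖ ^ 2 ≤ pastStepSum D ξ θ k / α ^ 2) :
    lagLyapunov f D β θ (k + 1) + (α / 2 * ‖gradient f (θ k)‖ ^ 2
      + pastStepSum D (fun d => β d - β (d + 1) - ξ d / (2 * α)) θ k)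
        ≤ lagLyapunov f D β θ k := by
  have hstep := inexact_gradient_step_le hf hL α g
  rw [← hupd] at hstep
  have hshift : pastStepSum D β θ (k + 1) =
      β 1 * ‖θ (k + 1) - θ k‖ ^ 2 + pastStepSum D (fun d => β (d + 1)) θ k := by
    rw [← pastStepSum_succ_of_eq_zero hβD, pastStepSum_succ_succ]
  have hnew : β 1 * ‖θ (k + 1) - θ k‖ ^ 2 ≤ α * (1 - α * L) / 2 * ‖g‖ ^ 2 :=
    calc β 1 * ‖θ (k + 1) - θ k‖ ^ 2
        ≤ (1 - α * L) / (2 * α) * ‖θ (k + 1) - θ k‖ ^ 2 := by gcongr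
      _ = α * (1 - α * L) / 2 * ‖g‖ ^ 2 := by
          rw [hupd, sub_sub_cancel_left, norm_neg, norm_smul, mul_pow, Real.norm_eq_abs, sq_abs]
          field_simp
  have herr' : α / 2 * ‖g - gradient f (θ k)‖ ^ 2 ≤ pastStepSum D ξ θ k / (2 * α) :=
    calc α / 2 * ‖g - gradient f (θ k)‖ ^ 2
        ≤ α / 2 * (pastStepSum D ξ θ k / α ^ 2) := by gcongr
      _ = pastStepSum D ξ θ k / (2 * α) := by field_simp
  have hsplit : pastStepSum D (fun d => β d - β (d + 1) - ξ d / (2 * α)) θ k =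
      pastStepSum D β θ k - pastStepSum D (fun d => β (d + 1)) θ k
        - pastStepSum D ξ θ k / (2 * α) := by
    simp only [pastStepSum, sub_mul, sum_sub_distrib, sum_div, div_mul_eq_mul_div]
  unfold lagLyapunov
  linarith

theorem summable_sq_norm_step_and_gradient (hD : 1 ≤ D) (hf : Differentiable ℝ f)
    (hL : ∀ x y, ‖gradient f x - gradient f y‖ ≤ L * ‖x - y‖) (hbdd : BddBelow (Set.range f))
    (hα : 0 < α) (hβ : ∀ d ∈ Icc 1 D, 0 ≤ β d) (hβD : β (D + 1) = 0)
    (hβ1 : β 1 ≤ (1 - α * L) / (2 * α))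
    (hξβ : ∀ d ∈ Icc 1 D, ξ d < 2 * α * (β d - β (d + 1))) {g : ℤ → E}
    (hupd : ∀ k, 1 ≤ k → θ (k + 1) = θ k - α • g k)
    (herr : ∀ k, 1 ≤ k → ‖g k - gradient f (θ k)‖ ^ 2 ≤ pastStepSum D ξ θ k / α ^ 2) :
    Summable (fun k : ℕ => ‖θ (k + 1 + 1) - θ (k + 1)‖ ^ 2) ∧
      Summable (fun k : ℕ => ‖gradient f (θ (k + 1))‖ ^ 2) := by
  set c : ℕ → ℝ := fun d => β d - β (d + 1) - ξ d / (2 * α)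
  have hc : ∀ d ∈ Icc 1 D, 0 < c d := fun d hd =>
    sub_pos.2 <| (div_lt_iff₀' (by positivity)).2 (hξβ d hd)
  have hpast (k : ℤ) : 0 ≤ pastStepSum D c θ k :=
    pastStepSum_nonneg (fun d hd => (hc d hd).le) θ k
  have hone : 1 ∈ Icc 1 D := mem_Icc.2 ⟨le_rfl, hD⟩
  have hdrop : Summable fun k : ℕ => α / 2 * ‖gradient f (θ (k + 1))‖ ^ 2
      + pastStepSum D c θ (k + 1) := by
    refine summable_of_succ_add_le_of_bddBelow (V := fun k => lagLyapunov f D β θ (k + 1)) ?_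
      (fun k => add_nonneg (by positivity) (hpast _)) fun k => ?_
    · obtain ⟨B, hB⟩ := hbdd
      refine ⟨B, ?_⟩
      rintro _ ⟨k, rfl⟩
      exact le_add_of_le_of_nonneg (hB ⟨_, rfl⟩) (pastStepSum_nonneg hβ θ _)
    · have hk : (1 : ℤ) ≤ k + 1 := by lia
      exact_mod_cast lagLyapunov_succ_add_le hf (fun y => hL y _) hα hβD hβ1
        (hupd _ hk) (herr _ hk)
  constructor
  · have hstep : Summable fun k : ℕ => c 1 * ‖θ (k + 1) - θ k‖ ^ 2 := by
      refine hdrop.of_nonneg_of_le (fun k => mul_nonneg (hc 1 hone).le (sq_nonneg _)) fun k => ?_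
      have h := mul_sq_norm_step_le_pastStepSum (fun d hd => (hc d hd).le) θ (k + 1) hone
      simp only [Nat.cast_one, add_sub_cancel_right] at h
      exact h.trans (le_add_of_nonneg_left (by positivity))
    have hstep' := (summable_mul_left_iff (hc 1 hone).ne').1 hstep
    exact_mod_cast (summable_nat_add_iff 1).2 hstep'
  · refine (summable_mul_left_iff (half_pos hα).ne').1 <|
      hdrop.of_nonneg_of_le (fun k => by positivity) fun k => ?_
    exact le_add_of_nonneg_right (hpast _)

end InexactGradientDescent

section LazyAggregation

variable {ι E : Type*} [Fintype ι] [NormedAddCommGroup E] [InnerProductSpace ℝ E]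
  [CompleteSpace E] {Lf : ι → E → ℝ}

theorem sq_norm_sum_gradient_sub_gradient_sum_le (hdiff : ∀ m, Differentiable ℝ (Lf m)) {x : E}
    {y : ι → E} {B : ℝ} (h : ∀ m, ‖gradient (Lf m) (y m) - gradient (Lf m) x‖ ^ 2 ≤ B) :
    ‖∑ m, gradient (Lf m) (y m) - gradient (fun z => ∑ m, Lf m z) x‖ ^ 2
      ≤ (Fintype.card ι : ℝ) ^ 2 * B := by
  rw [gradient_fun_sum fun m _ => hdiff m x, ← sum_sub_distrib]
  exact sq_norm_sum_le_card_sq_mul fun m _ => h m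

theorem sq_norm_lazy_gradient_error_le (hdiff : ∀ m, Differentiable ℝ (Lf m)) {x : E}
    {y : ι → E} {C : Finset ι} {α S : ℝ} (hS : 0 ≤ S) (hfresh : ∀ m ∉ C, y m = x)
    (htrig : ∀ m ∈ C, ‖gradient (Lf m) (y m) - gradient (Lf m) x‖ ^ 2
      ≤ 1 / (α ^ 2 * (Fintype.card ι : ℝ) ^ 2) * S) :
    ‖∑ m, gradient (Lf m) (y m) - gradient (fun z => ∑ m, Lf m z) x‖ ^ 2 ≤ S / α ^ 2 := by
  have herr (m : ι) : ‖gradient (Lf m) (y m) - gradient (Lf m) x‖ ^ 2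
      ≤ 1 / (α ^ 2 * (Fintype.card ι : ℝ) ^ 2) * S := by
    by_cases hm : m ∈ C
    · exact htrig m hm
    · rw [hfresh m hm, sub_self, norm_zero, zero_pow two_ne_zero]
      positivity
  calc ‖∑ m, gradient (Lf m) (y m) - gradient (fun z => ∑ m, Lf m z) x‖ ^ 2
      ≤ (Fintype.card ι : ℝ) ^ 2 * (1 / (α ^ 2 * (Fintype.card ι : ℝ) ^ 2) * S) :=
        sq_norm_sum_gradient_sub_gradient_sum_le hdiff herr
    _ = (Fintype.card ι : ℝ) ^ 2 * ((Fintype.card ι : ℝ) ^ 2)⁻¹ * (S / α ^ 2) := by ring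
    _ ≤ S / α ^ 2 := mul_le_of_le_one_left (by positivity) mul_inv_le_one

theorem lag_nonconvex_rates_general {D : ℕ} (hD : 1 ≤ D)
    (hdiff : ∀ m, Differentiable ℝ (Lf m)) {L : ℝ}
    (hsmooth : ∀ x y, ‖gradient (fun z => ∑ m, Lf m z) x
      - gradient (fun z => ∑ m, Lf m z) y‖ ≤ L * ‖x - y‖)
    (hbdd : BddBelow (Set.range fun z => ∑ m, Lf m z)) {α : ℝ} (hα : 0 < α)
    {ξ β : ℕ → ℝ} (hξ : ∀ d ∈ Icc 1 D, 0 ≤ ξ d) (hβ : ∀ d ∈ Icc 1 D, 0 ≤ β d)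
    (hβD : β (D + 1) = 0) (hβ1 : β 1 ≤ (1 - α * L) / (2 * α))
    (hξβ : ∀ d ∈ Icc 1 D, ξ d < 2 * α * (β d - β (d + 1)))
    {θ : ℤ → E} {Mc : ℤ → Finset ι} {θhat : ℤ → ι → E}
    (hfresh : ∀ k, 1 ≤ k → ∀ m ∉ Mc k, θhat k m = θ k)
    (hupd : ∀ k, 1 ≤ k → θ (k + 1) = θ k - α • ∑ m, gradient (Lf m) (θhat k m))
    (htrig : ∀ k, 1 ≤ k → ∀ m ∈ Mc k,
      ‖gradient (Lf m) (θhat k m) - gradient (Lf m) (θ k)‖ ^ 2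
        ≤ 1 / (α ^ 2 * (Fintype.card ι : ℝ) ^ 2) *
          ∑ d ∈ Icc 1 D, ξ d * ‖θ (k + 1 - (d : ℤ)) - θ (k - (d : ℤ))‖ ^ 2) :
    Tendsto (fun K : ℕ => (K : ℝ) *
        sInf ((fun k : ℤ => ‖θ (k + 1) - θ k‖ ^ 2) '' Set.Icc 1 (K : ℤ))) atTop (𝓝 0)
    ∧ Tendsto (fun K : ℕ => (K : ℝ) *
        sInf ((fun k : ℤ => ‖gradient (fun z => ∑ m, Lf m z) (θ k)‖ ^ 2) '' Set.Icc 1 (K : ℤ)))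
        atTop (𝓝 0) := by
  have hF : Differentiable ℝ fun z => ∑ m, Lf m z := by fun_prop
  obtain ⟨hstep, hgrad⟩ := summable_sq_norm_step_and_gradient hD hF hsmooth hbdd hα hβ hβD hβ1 hξβ
    hupd fun k hk => sq_norm_lazy_gradient_error_le hdiff (pastStepSum_nonneg hξ θ k)
      (hfresh k hk) (htrig k hk)
  exact ⟨tendsto_natCast_mul_sInf_image_Icc (fun _ => sq_nonneg _) hstep,
    tendsto_natCast_mul_sInf_image_Icc (fun _ => sq_nonneg _) hgrad⟩

end LazyAggregation

end

/-- Theorem 3: the o(1/K) rates of LAG for nonconvex smooth objectives. -/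
theorem lag_nonconvex_rates {n : ℕ}
    (M D : ℕ) (hM : 1 ≤ M) (hD : 1 ≤ D)
    (Lf : Fin M → EuclideanSpace ℝ (Fin n) → ℝ)
    (hdiff : ∀ m, Differentiable ℝ (Lf m))
    (L : ℝ) (hL : 0 < L)
    (hsmooth : ∀ x y, ‖gradient (fun z => ∑ m, Lf m z) x
        - gradient (fun z => ∑ m, Lf m z) y‖ ≤ L * ‖x - y‖)
    (Lstar : ℝ)
    (hbdd : BddBelow (Set.range fun z => ∑ m, Lf m z))
    (hLstar : Lstar = ⨅ x, ∑ m, Lf m x)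
    (α : ℝ) (hα : 0 < α) (hαL : α < 1 / L)
    (ξ : ℕ → ℝ) (hξ : ∀ d ∈ Finset.Icc 1 D, 0 ≤ ξ d)
    (β : ℕ → ℝ) (hβ : ∀ d ∈ Finset.Icc 1 D, 0 ≤ β d) (hβD : β (D + 1) = 0)
    (hβ1 : β 1 = (1 - α * L) / (2 * α))
    (hξβ : ∀ d ∈ Finset.Icc 1 D, ξ d < 2 * α * (β d - β (d + 1)))
    (θ : ℤ → EuclideanSpace ℝ (Fin n))
    (hpast : ∀ k : ℤ, k ≤ 1 → θ k = θ 1)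
    (Mc : ℤ → Finset (Fin M))
    (θhat : ℤ → Fin M → EuclideanSpace ℝ (Fin n))
    (hhat0 : ∀ m, θhat 0 m = θ 1)
    (hhat : ∀ k : ℤ, 1 ≤ k → ∀ m : Fin M,
      (m ∈ Mc k → θhat k m = θhat (k - 1) m) ∧ (m ∉ Mc k → θhat k m = θ k))
    (hupd : ∀ k : ℤ, 1 ≤ k →
      θ (k + 1) = θ k - α • ∑ m, gradient (Lf m) (θhat k m))
    (htrig : ∀ k : ℤ, 1 ≤ k → ∀ m ∈ Mc k,
      ‖gradient (Lf m) (θhat k m) - gradient (Lf m) (θ k)‖ ^ 2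
        ≤ (1 / (α ^ 2 * (M : ℝ) ^ 2)) *
            ∑ d ∈ Finset.Icc 1 D, ξ d * ‖θ (k + 1 - (d : ℤ)) - θ (k - (d : ℤ))‖ ^ 2) :
    Filter.Tendsto
      (fun K : ℕ => (K : ℝ) *
        sInf ((fun k : ℤ => ‖θ (k + 1) - θ k‖ ^ 2) '' Set.Icc 1 (K : ℤ)))
      Filter.atTop (nhds 0)
    ∧ Filter.Tendsto
      (fun K : ℕ => (K : ℝ) *
        sInf ((fun k : ℤ => ‖gradient (fun z => ∑ m, Lf m z) (θ k)‖ ^ 2) '' Set.Icc 1 (K : ℤ)))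
      Filter.atTop (nhds 0) := by
  exact lag_nonconvex_rates_general hD hdiff hsmooth hbdd hα hξ hβ hβD hβ1.le hξβ
    (fun k hk m => (hhat k hk m).2) hupd (by simpa only [Fintype.card_fin] using htrig)
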